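/- $\sum_{n=1}^{\infty} \frac{1}{n^2 \binom{2n}{n}}\left(24 \sum_{j=1}^{n-1} \frac{(-1)^j}{j^3} + \frac{7(-1)^n}{n^3}\right) = 7\,\zeta(5) - \pi^2 \zeta(3)$. -/

import Mathlib

open Filter Topology

/-- Alternating harmonic-type sum `∑_{j=1}^n (-1)^j / j^s`. -/
noncomputable def A (s n : ℕ) : ℝ := ∑ j ∈ Finset.range n, (-1:ℝ)^(j+1) / ((j:ℝ) + 1) ^ s

/-- The Riemann zeta value `ζ(s) = ∑_{n ≥ 1} 1/n^s`. -/
noncomputable def zeta (s : ℕ) : ℝ := ∑' n : ℕ, 1 / ((n:ℝ) + 1) ^ s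


namespace Ap
open MeasureTheory Set Real

lemma tend_logpow (j : ℕ) : Tendsto (fun s : ℝ => s * log s ^ j) (𝓝[>] 0) (𝓝 0) := by
  rcases Nat.eq_zero_or_pos j with rfl | hj
  · simp only [pow_zero, mul_one]
    exact tendsto_nhdsWithin_of_tendsto_nhds tendsto_id
  · have hj' : (0:ℝ) < j := by exact_mod_cast hj
    have h := (tendsto_log_mul_rpow_nhdsGT_zero (r := 1 / (j:ℝ)) (by positivity)).pow j
    rw [zero_pow (by omega)] at h
    refine h.congr' ?_
    filter_upwards [self_mem_nhdsWithin] with x hx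
    have hx : 0 < x := hx
    rw [mul_pow, ← rpow_natCast (x ^ (1 / (j:ℝ))), ← rpow_mul hx.le, one_div,
      inv_mul_cancel₀ hj'.ne', rpow_one, mul_comm]

lemma tend_pow_logpow (n j : ℕ) :
    Tendsto (fun s : ℝ => s ^ (n+1) * log s ^ j) (𝓝[>] 0) (𝓝 0) := by
  have h1 : Tendsto (fun s : ℝ => s ^ n) (𝓝[>] 0) (𝓝 (0 ^ n)) :=
    tendsto_nhdsWithin_of_tendsto_nhds ((continuous_pow n).tendsto 0)
  have := h1.mul (tend_logpow j)
  rw [mul_zero] at this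
  refine this.congr fun s => ?_
  ring

lemma logpow_int01 (k : ℕ) : IntervalIntegrable (fun s => log s ^ k) volume 0 1 := by
  rcases Nat.eq_zero_or_pos k with rfl | hk
  · simp
  have hk' : (0:ℝ) < k := by exact_mod_cast hk
  have h := (intervalIntegral.intervalIntegrable_rpow' (a := 0) (b := 1) (r := -(1/2))
    (by norm_num)).const_mul ((2*(k:ℝ))^k)
  refine h.mono_fun' (by fun_prop) ?_
  rw [uIoc_of_le zero_le_one]
  filter_upwards [ae_restrict_mem measurableSet_Ioc] with x hx
  have h1 := (Real.abs_log_mul_self_rpow_lt x (1/(2*(k:ℝ))) hx.1 hx.2 (by positivity)).le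
  have h2 : |log x| ^ k * x ^ ((1:ℝ)/2) ≤ (2*(k:ℝ))^k := by
    have := pow_le_pow_left₀ (abs_nonneg _) h1 k
    rw [abs_mul, mul_pow, abs_of_nonneg (rpow_nonneg hx.1.le _),
      ← rpow_natCast (x ^ (1 / (2*(k:ℝ)))), ← rpow_mul hx.1.le] at this
    have e : 1 / (2*(k:ℝ)) * k = 1/2 := by field_simp
    rw [e] at this
    simpa using this
  rw [norm_eq_abs, abs_pow, rpow_neg hx.1.le]
  have h3 : 0 < x ^ ((1:ℝ)/2) := rpow_pos_of_pos hx.1 _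
  rw [← div_eq_mul_inv, le_div_iff₀ h3]
  exact h2

lemma logpow_int (k : ℕ) {x : ℝ} (hx : 0 < x) :
    IntervalIntegrable (fun s => log s ^ k) volume 0 x := by
  refine (logpow_int01 k).trans ?_
  apply ContinuousOn.intervalIntegrable
  intro y hy
  have : 0 < y := lt_of_lt_of_le (lt_min one_pos hx) hy.1
  exact ((continuousAt_log this.ne').pow k).continuousWithinAt

/-- generic facts on primitives -/
lemma prim_tendsto {g : ℝ → ℝ} (hg : IntervalIntegrable g volume 0 1) :
    Tendsto (fun x => ∫ s in (0:ℝ)..x, g s) (𝓝[>] 0) (𝓝 0) := by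
  have h := intervalIntegral.continuousOn_primitive_interval (μ := volume) (f := g) (a := 0) (b := 1)
    (by rw [uIcc_of_le zero_le_one]; exact (intervalIntegrable_iff_integrableOn_Icc_of_le zero_le_one).1 hg)
  rw [uIcc_of_le zero_le_one] at h
  have h0 := h 0 ⟨le_rfl, zero_le_one⟩
  have h0 : Tendsto (fun x => ∫ s in (0:ℝ)..x, g s) (𝓝[Icc 0 1] 0) (𝓝 (∫ s in (0:ℝ)..0, g s)) := h0
  rw [intervalIntegral.integral_same] at h0
  refine h0.mono_left ?_
  rw [← nhdsWithin_Ioc_eq_nhdsGT (zero_lt_one' ℝ)]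
  exact nhdsWithin_mono _ Ioc_subset_Icc_self

lemma prim_tendsto_one {g : ℝ → ℝ} (hg : IntervalIntegrable g volume 0 1) :
    Tendsto (fun x => ∫ s in (0:ℝ)..x, g s) (𝓝[<] 1) (𝓝 (∫ s in (0:ℝ)..1, g s)) := by
  have h := intervalIntegral.continuousOn_primitive_interval (μ := volume) (f := g) (a := 0) (b := 1)
    (by rw [uIcc_of_le zero_le_one]; exact (intervalIntegrable_iff_integrableOn_Icc_of_le zero_le_one).1 hg)
  rw [uIcc_of_le zero_le_one] at h
  have h0 := h 1 ⟨zero_le_one, le_rfl⟩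
  have h0 : Tendsto (fun x => ∫ s in (0:ℝ)..x, g s) (𝓝[Icc 0 1] 1) (𝓝 (∫ s in (0:ℝ)..1, g s)) := h0
  refine h0.mono_left ?_
  rw [← nhdsWithin_Ico_eq_nhdsLT (zero_lt_one' ℝ)]
  exact nhdsWithin_mono _ Ico_subset_Icc_self

lemma prim_deriv {g : ℝ → ℝ} {x : ℝ} (hm : Measurable g) (hg : IntervalIntegrable g volume 0 x)
    (hc : ContinuousAt g x) : HasDerivAt (fun x => ∫ s in (0:ℝ)..x, g s) (g x) x :=
  intervalIntegral.integral_hasDerivAt_right hg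
    hm.stronglyMeasurable.stronglyMeasurableAtFilter hc

/-- zero derivative on (0,b) and limit at 0 -/
lemma const_of_deriv {f : ℝ → ℝ} {b c x : ℝ} (hd : ∀ x ∈ Ioo 0 b, HasDerivAt f 0 x)
    (hl : Tendsto f (𝓝[>] 0) (𝓝 c)) (hx : x ∈ Ioo 0 b) : f x = c := by
  have h : ∀ y ∈ Ioo 0 b, f y = f x := fun y hy =>
    isOpen_Ioo.is_const_of_deriv_eq_zero isPreconnected_Ioo
      (fun z hz => (hd z hz).differentiableAt.differentiableWithinAt)
      (fun z hz => (hd z hz).deriv) hy hx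
  have hb : 0 < b := hx.1.trans hx.2
  have h2 : Tendsto f (𝓝[>] 0) (𝓝 (f x)) := by
    refine tendsto_const_nhds.congr' ?_
    filter_upwards [Ioo_mem_nhdsGT hb] with y hy
    exact (h y hy).symm
  exact tendsto_nhds_unique h2 hl

noncomputable def gP (k : ℕ) (s : ℝ) : ℝ := log s ^ k * (1 / (1 + s))
noncomputable def gM (k : ℕ) (s : ℝ) : ℝ := log s ^ k / (1 - s)
noncomputable def g3 (s : ℝ) : ℝ := log s ^ 4 * ((1 + 2*s) / (1 + s + s^2))
noncomputable def KP (k : ℕ) (x : ℝ) : ℝ := ∫ s in (0:ℝ)..x, gP k s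
noncomputable def KM (k : ℕ) (x : ℝ) : ℝ := ∫ s in (0:ℝ)..x, gM k s
noncomputable def K3 (x : ℝ) : ℝ := ∫ s in (0:ℝ)..x, g3 s

lemma gP_int (k : ℕ) {x : ℝ} (hx : 0 < x) : IntervalIntegrable (gP k) volume 0 x := by
  refine (logpow_int k hx).mul_continuousOn ?_
  rw [uIcc_of_le hx.le]
  intro y hy
  have : 1 + y ≠ 0 := by linarith [hy.1]
  exact ContinuousAt.continuousWithinAt (by fun_prop (disch := assumption))

lemma g3_int {x : ℝ} (hx : 0 < x) : IntervalIntegrable g3 volume 0 x := by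
  refine (logpow_int 4 hx).mul_continuousOn ?_
  rw [uIcc_of_le hx.le]
  intro y hy
  have : 1 + y + y^2 ≠ 0 := by nlinarith [hy.1]
  exact ContinuousAt.continuousWithinAt (by fun_prop (disch := assumption))

lemma gM_int01 (k : ℕ) (hk : 1 ≤ k) : IntervalIntegrable (gM k) volume 0 1 := by
  obtain ⟨k, rfl⟩ := Nat.exists_eq_add_of_le hk
  have h := (((logpow_int01 k).abs).add ((logpow_int01 (1+k)).abs)).const_mul 2
  refine h.mono_fun' (by unfold gM; exact (Measurable.div (by fun_prop) (by fun_prop)).aestronglyMeasurable) ?_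
  rw [uIoc_of_le zero_le_one]
  filter_upwards [ae_restrict_mem measurableSet_Ioc] with x hx
  rcases eq_or_lt_of_le hx.2 with rfl | h1
  · simp [gM]
  simp only [gM, norm_div, norm_eq_abs, abs_pow, abs_of_pos (sub_pos.2 h1)]
  rw [div_le_iff₀ (sub_pos.2 h1), pow_add, pow_one]
  have hA : 0 ≤ |log x| ^ k := by positivity
  rcases le_total x (1/2) with h2 | h2
  · have : 0 ≤ |log x| := abs_nonneg _
    have h3 : 0 ≤ |log x| * |log x|^k := by positivity
    nlinarith [mul_nonneg hA (sub_pos.2 h1).le, mul_nonneg h3 (sub_nonneg.2 h2)]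
  · have h4 : |log x| ≤ 2 * (1 - x) := by
      rw [abs_of_neg (log_neg hx.1 h1)]
      have := Real.one_sub_inv_le_log_of_pos hx.1
      have h5 : x⁻¹ - 1 ≤ 2 * (1 - x) := by
        rw [inv_eq_one_div, sub_le_iff_le_add, div_le_iff₀ hx.1]; nlinarith
      linarith
    have h3 : 0 ≤ |log x| * |log x|^k := by positivity
    nlinarith [mul_le_mul_of_nonneg_right h4 hA, mul_nonneg h3 (sub_pos.2 h1).le]

lemma gM_int (k : ℕ) (hk : 1 ≤ k) {x : ℝ} (hx : 0 < x) (hx1 : x ≤ 1) :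
    IntervalIntegrable (gM k) volume 0 x :=
  (gM_int01 k hk).mono_set (by rw [uIcc_of_le hx.le, uIcc_of_le zero_le_one]; exact Icc_subset_Icc_right hx1)

lemma KP_deriv (k : ℕ) {x : ℝ} (hx : 0 < x) : HasDerivAt (KP k) (log x ^ k * (1 / (1 + x))) x := by
  refine prim_deriv (g := gP k) (by unfold gP; fun_prop) (gP_int k hx) ?_
  have h1 : x ≠ 0 := hx.ne'
  have h2 : 1 + x ≠ 0 := by linarith
  unfold gP
  fun_prop (disch := assumption)

lemma K3_deriv {x : ℝ} (hx : 0 < x) :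
    HasDerivAt K3 (log x ^ 4 * ((1 + 2*x) / (1 + x + x^2))) x := by
  refine prim_deriv (g := g3) (by unfold g3; fun_prop) (g3_int hx) ?_
  have h1 : x ≠ 0 := hx.ne'
  have h2 : 1 + x + x^2 ≠ 0 := by positivity
  unfold g3
  fun_prop (disch := assumption)

lemma KM_deriv (k : ℕ) (hk : 1 ≤ k) {x : ℝ} (hx : 0 < x) (hx1 : x < 1) :
    HasDerivAt (KM k) (log x ^ k / (1 - x)) x := by
  refine prim_deriv (g := gM k) (by unfold gM; fun_prop) (gM_int k hk hx hx1.le) ?_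
  have h1 : x ≠ 0 := hx.ne'
  have h2 : 1 - x ≠ 0 := by linarith
  unfold gM
  fun_prop (disch := assumption)

lemma KP_zero (k : ℕ) : Tendsto (KP k) (𝓝[>] 0) (𝓝 0) := prim_tendsto (gP_int k one_pos)
lemma K3_zero : Tendsto K3 (𝓝[>] 0) (𝓝 0) := prim_tendsto (g3_int one_pos)
lemma KM_zero (k : ℕ) (hk : 1 ≤ k) : Tendsto (KM k) (𝓝[>] 0) (𝓝 0) := prim_tendsto (gM_int01 k hk)
lemma KM_one (k : ℕ) (hk : 1 ≤ k) : Tendsto (KM k) (𝓝[<] 1) (𝓝 (KM k 1)) :=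
  prim_tendsto_one (gM_int01 k hk)
lemma KP_one (k : ℕ) : Tendsto (KP k) (𝓝[<] 1) (𝓝 (KP k 1)) :=
  prim_tendsto_one (gP_int k one_pos)

lemma spow_log_int (n k : ℕ) : IntervalIntegrable (fun s => s^n * log s ^ k) volume 0 1 :=
  (logpow_int01 k).continuousOn_mul (by fun_prop)

lemma integral_spow_log (n k : ℕ) :
    ∫ s in (0:ℝ)..1, s^n * log s ^ k = (-1)^k * (k.factorial : ℝ) / ((n:ℝ)+1)^(k+1) := by
  induction k with
  | zero => simp
  | succ k ih =>
    have h := intervalIntegral.integral_eq_sub_of_hasDerivAt_of_tendsto (zero_lt_one' ℝ)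
      (f := fun s => s^(n+1) * log s ^ (k+1))
      (f' := fun s => ((n:ℝ)+1) * (s^n * log s ^ (k+1)) + ((k:ℝ)+1) * (s^n * log s ^ k))
      (fa := 0) (fb := 0) ?_ ?_ (tend_pow_logpow n (k+1)) ?_
    · rw [intervalIntegral.integral_add ((spow_log_int n (k+1)).const_mul _)
        ((spow_log_int n k).const_mul _), intervalIntegral.integral_const_mul,
        intervalIntegral.integral_const_mul, ih] at h
      have hn : (n:ℝ) + 1 ≠ 0 := by positivity
      rw [Nat.factorial_succ]
      push_cast
      field_simp at h ⊢
      rw [pow_succ (-1:ℝ) k]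
      linear_combination h
    · intro x hx
      have h1 : x ≠ 0 := hx.1.ne'
      have h2 := (hasDerivAt_pow (n+1) x).mul ((hasDerivAt_log h1).pow (k+1))
      refine h2.congr_deriv ?_
      simp only [Nat.add_sub_cancel, Pi.pow_apply]
      push_cast
      field_simp
      ring
    · exact ((spow_log_int n (k+1)).const_mul _).add ((spow_log_int n k).const_mul _)
    · have h : ContinuousAt (fun s : ℝ => s^(n+1) * log s ^ (k+1)) 1 := by
        have : (1:ℝ) ≠ 0 := one_ne_zero
        fun_prop (disch := assumption)
      have h := h.tendsto
      simp only [log_one] at h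
      rw [zero_pow (by omega), mul_zero] at h
      exact h.mono_left nhdsWithin_le_nhds

lemma KM_val (k : ℕ) (hk : 1 ≤ k) (he : Even k) : KM k 1 = (k.factorial : ℝ) * zeta (k+1) := by
  have hval : ∀ n : ℕ, ∫ s in Ioc (0:ℝ) 1, s^n * log s ^ k
      = (k.factorial : ℝ) * (1 / ((n:ℝ)+1)^(k+1)) := by
    intro n
    rw [← intervalIntegral.integral_of_le zero_le_one, integral_spow_log, he.neg_one_pow]
    ring
  have hnn : ∀ n : ℕ, ∫ s in Ioc (0:ℝ) 1, ‖s^n * log s ^ k‖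
      = (k.factorial : ℝ) * (1 / ((n:ℝ)+1)^(k+1)) := by
    intro n
    rw [← hval n]
    refine setIntegral_congr_fun measurableSet_Ioc fun s hs => ?_
    rw [norm_of_nonneg]
    exact mul_nonneg (pow_nonneg hs.1.le _) (he.pow_nonneg _)
  have hs : Summable fun n : ℕ => (k.factorial : ℝ) * (1 / ((n:ℝ)+1)^(k+1)) := by
    apply Summable.mul_left
    have := (summable_nat_add_iff 1).2 (Real.summable_one_div_nat_pow (p := k+1) |>.2 (by omega))
    simpa using this
  have h := hasSum_integral_of_summable_integral_norm (μ := volume.restrict (Ioc (0:ℝ) 1))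
    (F := fun (n:ℕ) (s:ℝ) => s^n * log s ^ k)
    (fun n => (intervalIntegrable_iff_integrableOn_Ioc_of_le zero_le_one).1 (spow_log_int n k))
    (by simp only [hnn]; exact hs)
  simp only [hval] at h
  have h2 : KM k 1 = ∫ s in Ioc (0:ℝ) 1, ∑' n : ℕ, s^n * log s ^ k := by
    unfold KM
    rw [intervalIntegral.integral_of_le zero_le_one]
    refine setIntegral_congr_fun measurableSet_Ioc fun s hs => ?_
    simp only [gM]
    rcases eq_or_lt_of_le hs.2 with rfl | h1
    · simp only [log_one]
      rw [zero_pow (by omega)]; simp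
    · rw [tsum_mul_right, tsum_geometric_of_lt_one hs.1.le h1]
      field_simp
  rw [h2, ← h.tsum_eq, tsum_mul_left]
  rfl

lemma tend_pow0 (n : ℕ) (hn : n ≠ 0) : Tendsto (fun x : ℝ => x^n) (𝓝[>] 0) (𝓝[>] 0) := by
  refine tendsto_nhdsWithin_of_tendsto_nhds_of_eventually_within _ ?_ ?_
  · have := (continuous_pow (M := ℝ) n).tendsto 0
    rw [zero_pow hn] at this
    exact this.mono_left nhdsWithin_le_nhds
  · filter_upwards [self_mem_nhdsWithin] with x hx
    have hx : 0 < x := hx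
    exact pow_pos hx n

lemma KP_comp (k : ℕ) {u : ℝ → ℝ} {u' y : ℝ} (h : HasDerivAt u u' y) (h0 : 0 < u y) :
    HasDerivAt (fun t => KP k (u t)) (log (u y) ^ k * (1 / (1 + u y)) * u') y :=
  HasDerivAt.comp (h₂ := KP k) (h := u) y (KP_deriv k h0) h

lemma KM_comp (k : ℕ) (hk : 1 ≤ k) {u : ℝ → ℝ} {u' y : ℝ} (h : HasDerivAt u u' y) (h0 : 0 < u y)
    (h1 : u y < 1) :
    HasDerivAt (fun t => KM k (u t)) (log (u y) ^ k / (1 - u y) * u') y :=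
  HasDerivAt.comp (h₂ := KM k) (h := u) y (KM_deriv k hk h0 h1) h

lemma K3_comp {u : ℝ → ℝ} {u' y : ℝ} (h : HasDerivAt u u' y) (h0 : 0 < u y) :
    HasDerivAt (fun t => K3 (u t)) (log (u y) ^ 4 * ((1 + 2 * u y) / (1 + u y + u y ^ 2)) * u') y :=
  HasDerivAt.comp (h₂ := K3) (h := u) y (K3_deriv h0) h

lemma dup (k : ℕ) (hk : 1 ≤ k) {x : ℝ} (hx : x ∈ Ioo (0:ℝ) 1) :
    KM k x - KP k x - KM k (x^2) / 2^k = 0 := by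
  refine const_of_deriv (f := fun x => KM k x - KP k x - KM k (x^2) / 2^k) (b := 1) ?_ ?_ hx
  · intro y hy
    have hy1 : y^2 < 1 := by nlinarith [hy.1, hy.2]
    have hy0 : 0 < y^2 := by have := hy.1; positivity
    have h := ((KM_deriv k hk hy.1 hy.2).sub (KP_deriv k hy.1)).sub
      ((KM_comp k hk (hasDerivAt_pow 2 y) hy0 hy1).div_const (2^k))
    refine h.congr_deriv ?_
    have e1 : (1:ℝ) - y ≠ 0 := by linarith [hy.2]
    have e2 : (1:ℝ) + y ≠ 0 := by linarith [hy.1]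
    have e3 : (1:ℝ) - y^2 ≠ 0 := by linarith
    rw [log_pow, mul_pow]
    have e4 : (1:ℝ) - y^2 = (1-y)*(1+y) := by ring
    rw [e4]
    push_cast
    field_simp
    ring
  · have h2 := tend_pow0 2 (by norm_num)
    have := ((KM_zero k hk).sub (KP_zero k)).sub (((KM_zero k hk).comp h2).div_const (2^k))
    simpa using this

lemma dup_one (k : ℕ) (hk : 1 ≤ k) : KM k 1 - KP k 1 - KM k 1 / 2^k = 0 := by
  have h2 : Tendsto (fun x : ℝ => x^2) (𝓝[<] 1) (𝓝[<] 1) := by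
    refine tendsto_nhdsWithin_of_tendsto_nhds_of_eventually_within _ ?_ ?_
    · have := (continuous_pow (M := ℝ) 2).tendsto 1
      simp only [one_pow] at this
      exact this.mono_left nhdsWithin_le_nhds
    · filter_upwards [Ioo_mem_nhdsLT (zero_lt_one' ℝ)] with x hx
      show x^2 < 1
      nlinarith [hx.1, hx.2]
  have h := ((KM_one k hk).sub (KP_one k)).sub (((KM_one k hk).comp h2).div_const (2^k))
  refine tendsto_nhds_unique h (tendsto_const_nhds.congr' ?_)
  filter_upwards [Ioo_mem_nhdsLT (zero_lt_one' ℝ)] with x hx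
  exact (dup k hk hx).symm

lemma KP4_one : KP 4 1 = 45/2 * zeta 5 := by
  have h := dup_one 4 (by norm_num)
  have h2 := KM_val 4 (by norm_num) (by decide)
  norm_num [Nat.factorial] at h h2
  linarith

lemma KP2_one : KP 2 1 = 3/2 * zeta 3 := by
  have h := dup_one 2 (by norm_num)
  have h2 := KM_val 2 (by norm_num) (by decide)
  norm_num [Nat.factorial] at h h2
  linarith

lemma const_pos {f : ℝ → ℝ} {x : ℝ} (hd : ∀ x, 0 < x → HasDerivAt f 0 x) (hx : 0 < x) :
    f x = f 1 :=
  isOpen_Ioi.is_const_of_deriv_eq_zero (s := Ioi (0:ℝ)) isPreconnected_Ioi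
      (fun z hz => (hd z hz).differentiableAt.differentiableWithinAt)
      (fun z hz => (hd z hz).deriv) hx (mem_Ioi.2 one_pos)

lemma KP_inv {x : ℝ} (hx : 0 < x) : KP 4 x⁻¹ = KP 4 x - log x ^ 5 / 5 := by
  have h := const_pos (f := fun x => KP 4 x⁻¹ - KP 4 x + log x ^ 5 / 5) (x := x) ?_ hx
  · simp at h; linarith
  · intro y hy
    have h := (((KP_deriv 4 (inv_pos.2 hy)).comp y (hasDerivAt_inv hy.ne')).sub (KP_deriv 4 hy)).add
      (((hasDerivAt_log hy.ne').pow 5).div_const 5)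
    refine h.congr_deriv ?_
    rw [log_inv]
    field_simp
    ring

lemma K3_inv {x : ℝ} (hx : 0 < x) : K3 x⁻¹ = K3 x - 2 * log x ^ 5 / 5 := by
  have h := const_pos (f := fun x => K3 x⁻¹ - K3 x + 2 * log x ^ 5 / 5) (x := x) ?_ hx
  · simp at h; linarith
  · intro y hy
    have h := (((K3_deriv (inv_pos.2 hy)).comp y (hasDerivAt_inv hy.ne')).sub (K3_deriv hy)).add
      ((((hasDerivAt_log hy.ne').pow 5).const_mul 2).div_const 5)
    refine h.congr_deriv ?_
    rw [log_inv]
    have e : 1 + y⁻¹ + y⁻¹^2 = (1 + y + y^2) / y^2 := by field_simp; ring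
    have e2 : 1 + y + y^2 ≠ 0 := by positivity
    rw [e]
    field_simp
    ring

lemma K3_eq {x : ℝ} (hx : x ∈ Ioo (0:ℝ) 1) : K3 x = KM 4 x - KM 4 (x^3) / 81 := by
  have h := const_of_deriv (f := fun x => K3 x - KM 4 x + KM 4 (x^3) / 81) (b := 1) (c := 0) ?_ ?_ hx
  · linarith
  · intro y hy
    have hy1 : y^3 < 1 := pow_lt_one₀ hy.1.le hy.2 (by norm_num)
    have hy0 : 0 < y^3 := pow_pos hy.1 3
    have h := ((K3_deriv hy.1).sub (KM_deriv 4 (by norm_num) hy.1 hy.2)).add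
      ((KM_comp 4 (by norm_num) (hasDerivAt_pow 3 y) hy0 hy1).div_const 81)
    refine h.congr_deriv ?_
    have e1 : (1:ℝ) - y ≠ 0 := by linarith [hy.2]
    have e2 : 1 + y + y^2 ≠ 0 := by have := hy.1; positivity
    have e4 : (1:ℝ) - y^3 = (1-y)*(1+y+y^2) := by ring
    rw [log_pow, e4]
    push_cast
    field_simp
    ring
  · have := (K3_zero.sub (KM_zero 4 (by norm_num))).add
      (((KM_zero 4 (by norm_num)).comp (tend_pow0 3 (by norm_num))).div_const 81)
    simpa using this


noncomputable def W (x : ℝ) : ℝ := 2 * arsinh (√x / 2)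
noncomputable def F (x : ℝ) : ℝ := log x ^ 2 * (W x ^ 2 * (17 / x - 24 / (1 + x)))
noncomputable def Gf (x : ℝ) : ℝ := ∫ s in (0:ℝ)..x, F s

lemma arsinh_le {x : ℝ} (hx : 0 ≤ x) : arsinh x ≤ x := by
  have h : arsinh x ≤ sinh (arsinh x) := Real.self_le_sinh_iff.2 (arsinh_nonneg_iff.2 hx)
  rwa [sinh_arsinh] at h

lemma W_nonneg (x : ℝ) : 0 ≤ W x := by
  unfold W
  have := arsinh_nonneg_iff.2 (show 0 ≤ √x / 2 by positivity)
  linarith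

lemma W_sq_le {x : ℝ} (hx : 0 ≤ x) : W x ^ 2 ≤ x := by
  have h1 : W x ≤ √x := by
    unfold W
    have := arsinh_le (show 0 ≤ √x / 2 by positivity)
    linarith
  have := pow_le_pow_left₀ (W_nonneg x) h1 2
  rwa [sq_sqrt hx] at this

lemma W_cosh {w : ℝ} (hw : 0 ≤ w) : W (2 * cosh w - 2) = w := by
  have h : 2 * cosh w - 2 = (2 * sinh (w/2))^2 := by
    have e : cosh w = cosh (2 * (w/2)) := by congr 1; ring
    rw [e, cosh_two_mul, cosh_sq]; ring
  unfold W
  rw [h, sqrt_sq (by have := sinh_nonneg_iff.2 (show 0 ≤ w/2 by linarith); linarith)]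
  rw [show 2 * sinh (w/2) / 2 = sinh (w/2) by ring, arsinh_sinh]
  ring

lemma W_tau {t : ℝ} (ht : t ∈ Ioo (0:ℝ) 1) : W (t^2/(1-t)) = - log (1-t) := by
  have h1 : 0 < 1 - t := by linarith [ht.2]
  have h := W_cosh (w := - log (1-t)) (by
    have := log_nonpos h1.le (by linarith [ht.1]); linarith)
  rw [cosh_neg, cosh_eq, exp_neg, exp_log h1] at h
  rw [← h]
  congr 1
  field_simp
  ring

lemma W_cont : Continuous W := by
  have h : Continuous arsinh := Real.continuous_arsinh
  unfold W
  exact continuous_const.mul (h.comp (continuous_sqrt.div_const 2))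

lemma F_meas : Measurable F := by
  have := W_cont.measurable
  unfold F; fun_prop

lemma F_bound {x : ℝ} (hx : 0 < x) : |W x ^ 2 * (17 / x - 24 / (1 + x))| ≤ 41 := by
  have h1 := W_sq_le hx.le
  have h0 := sq_nonneg (W x)
  have h2 : W x ^ 2 / x ≤ 1 := (div_le_one hx).2 h1
  have h3 : W x ^ 2 / (1 + x) ≤ 1 := (div_le_one (by linarith)).2 (by linarith)
  have h4 : 0 ≤ W x ^ 2 / x := by positivity
  have h5 : 0 ≤ W x ^ 2 / (1 + x) := by positivity
  have e : W x ^ 2 * (17 / x - 24 / (1 + x)) = 17 * (W x ^ 2 / x) - 24 * (W x ^ 2 / (1 + x)) := by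
    ring
  rw [e, abs_le]
  constructor <;> linarith

lemma F_int {x : ℝ} (hx : 0 < x) : IntervalIntegrable F volume 0 x := by
  refine ((logpow_int 2 hx).const_mul 41).mono_fun' F_meas.aestronglyMeasurable ?_
  rw [uIoc_of_le hx.le]
  filter_upwards [ae_restrict_mem measurableSet_Ioc] with y hy
  unfold F
  rw [norm_mul, norm_of_nonneg (sq_nonneg (log y)), norm_eq_abs, mul_comm]
  exact mul_le_mul_of_nonneg_right (F_bound hy.1) (sq_nonneg _)

lemma Gf_deriv {x : ℝ} (hx : 0 < x) : HasDerivAt Gf (F x) x := by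
  refine prim_deriv F_meas (F_int hx) ?_
  have h1 : x ≠ 0 := hx.ne'
  have h2 : 1 + x ≠ 0 := by linarith
  have := W_cont.continuousAt (x := x)
  unfold F
  fun_prop (disch := assumption)

lemma Gf_comp {u : ℝ → ℝ} {u' y : ℝ} (h : HasDerivAt u u' y) (h0 : 0 < u y) :
    HasDerivAt (fun t => Gf (u t)) (F (u y) * u') y :=
  HasDerivAt.comp (h₂ := Gf) (h := u) y (Gf_deriv h0) h

lemma Gf_zero : Tendsto Gf (𝓝[>] 0) (𝓝 0) := prim_tendsto (F_int one_pos)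

noncomputable def P (a b : ℝ) : ℝ :=
  136/3 * (a^3*b^2) - 68 * (a^2*b^3) + 37 * (a*b^4) - 103/15 * b^5

lemma du_sub (t : ℝ) : HasDerivAt (fun t : ℝ => 1 - t) (-1) t := by
  simpa using (hasDerivAt_id t).const_sub 1

lemma du_r {t : ℝ} (h : 1 - t ≠ 0) : HasDerivAt (fun t : ℝ => t / (1-t)) (1/(1-t)^2) t := by
  refine ((hasDerivAt_id t).div (du_sub t) h).congr_deriv ?_
  simp only [id]
  field_simp
  ring

lemma du_y {t : ℝ} (h : 1 - t ≠ 0) :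
    HasDerivAt (fun t : ℝ => t / (1-t)^2) ((1+t)/(1-t)^3) t := by
  refine ((hasDerivAt_id t).div ((du_sub t).pow 2) (pow_ne_zero 2 h)).congr_deriv ?_
  simp only [id, Pi.pow_apply]
  field_simp
  ring

lemma du_tau {t : ℝ} (h : 1 - t ≠ 0) :
    HasDerivAt (fun t : ℝ => t^2 / (1-t)) (t*(2-t)/(1-t)^2) t := by
  refine ((hasDerivAt_pow 2 t).div (du_sub t) h).congr_deriv ?_
  field_simp
  ring

lemma du_X (t : ℝ) : HasDerivAt (fun t : ℝ => t * (1-t)) (1-2*t) t := by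
  refine ((hasDerivAt_id t).mul (du_sub t)).congr_deriv ?_
  simp only [id]
  ring

lemma du_P {t : ℝ} (h0 : t ≠ 0) (h : 1 - t ≠ 0) :
    HasDerivAt (fun t : ℝ => P (log t) (log (1-t)))
     ((136 * (log t^2*log (1-t)^2) - 136 * (log t*log (1-t)^3) + 37 * log (1-t)^4) / t
      - (272/3 * (log t^3*log (1-t)) - 204 * (log t^2*log (1-t)^2) + 148 * (log t*log (1-t)^3)
        - 103/3 * log (1-t)^4) / (1-t)) t := by
  have ha := hasDerivAt_log h0
  have hb : HasDerivAt (fun t : ℝ => log (1-t)) (-1/(1-t)) t := (du_sub t).log h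
  have H := (((((ha.pow 3).mul (hb.pow 2)).const_mul (136/3)).sub
    (((ha.pow 2).mul (hb.pow 3)).const_mul 68)).add ((ha.mul (hb.pow 4)).const_mul 37)).sub
    ((hb.pow 5).const_mul (103/15))
  refine H.congr_deriv ?_
  simp only [Pi.pow_apply]
  push_cast
  field_simp
  ring

lemma main_deriv {t : ℝ} (ht : t ∈ Ioo (0:ℝ) 1) :
    HasDerivAt (fun t => Gf (t^2/(1-t)) - (P (log t) (log (1-t))
    + 4/9 * (KP 4 (t/(1-t)^2) - KP 4 (t^3) - KM 4 (t*(1-t)))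
    + 36 * (KP 4 t - K3 (t/(1-t))) + 12 * (KP 4 (t/(1-t)) - KM 4 t)
    + 40/9 * KP 4 (t^2/(1-t)) + 3 * KM 4 (1-t))) 0 t := by
  obtain ⟨h0, h1⟩ := ht
  have h1' : 0 < 1 - t := by linarith
  have n0 : t ≠ 0 := h0.ne'
  have n1 : 1 - t ≠ 0 := h1'.ne'
  have hc : 0 < 1 - t + t^2 := by positivity
  have nc : 1 - t + t^2 ≠ 0 := hc.ne'
  have np : 1 + t ≠ 0 := by positivity
  have lt : log (t^2/(1-t)) = 2 * log t - log (1-t) := by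
    rw [log_div (by positivity) n1, log_pow]; push_cast; ring
  have lr : log (t/(1-t)) = log t - log (1-t) := log_div n0 n1
  have ly : log (t/(1-t)^2) = log t - 2 * log (1-t) := by
    rw [log_div n0 (by positivity), log_pow]; push_cast; ring
  have lX : log (t*(1-t)) = log t + log (1-t) := log_mul n0 n1
  have l3 : log (t^3) = 3 * log t := by rw [log_pow]; push_cast; ring
  set a := log t with ha
  set b := log (1-t) with hb
  have d1 := (Gf_comp (du_tau n1) (by positivity)).congr_deriv (g' := (2*a-b)^2*b^2 *
      (17*(2-t)/(t*(1-t)) - 24*(t*(2-t))/((1-t)*(1-t+t^2)))) (by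
    unfold F
    rw [W_tau ⟨h0, h1⟩, lt, ← hb]
    have e : 1 + t^2/(1-t) = (1-t+t^2)/(1-t) := by field_simp
    rw [e]
    field_simp)
  have d2 := (KP_comp 4 (du_y n1) (by positivity)).congr_deriv
      (g' := (a-2*b)^4 * ((1+t)/((1-t)*(1-t+t^2)))) (by
    rw [ly]
    have e : 1 + t/(1-t)^2 = (1-t+t^2)/(1-t)^2 := by field_simp; ring
    rw [e]
    field_simp)
  have d3 := (KP_comp 4 (hasDerivAt_pow 3 t) (by positivity)).congr_deriv
      (g' := (3*a)^4 * (3*t^2/((1+t)*(1-t+t^2)))) (by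
    rw [l3]
    have e : 1 + t^3 = (1+t)*(1-t+t^2) := by ring
    rw [e]
    field_simp
    push_cast; ring)
  have d4 := (KM_comp 4 (by norm_num) (du_X t) (by positivity) (by nlinarith)).congr_deriv
      (g' := (a+b)^4 * ((1-2*t)/(1-t+t^2))) (by
    rw [lX]
    have e : 1 - t*(1-t) = 1-t+t^2 := by ring
    rw [e]
    field_simp)
  have d5 := KP_deriv 4 h0
  have d6 := (K3_comp (du_r n1) (by positivity)).congr_deriv
      (g' := (a-b)^4 * ((1+t)/((1-t)*(1-t+t^2)))) (by
    rw [lr]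
    have e : 1 + t/(1-t) + (t/(1-t))^2 = (1-t+t^2)/(1-t)^2 := by field_simp; ring
    have e2 : 1 + 2*(t/(1-t)) = (1+t)/(1-t) := by field_simp; ring
    rw [e, e2]
    field_simp)
  have d7 := (KP_comp 4 (du_r n1) (by positivity)).congr_deriv
      (g' := (a-b)^4 * (1/(1-t))) (by
    rw [lr]
    have e : 1 + t/(1-t) = 1/(1-t) := by field_simp; ring
    rw [e]
    field_simp)
  have d8 := KM_deriv 4 (by norm_num) h0 h1
  have d9 := (KP_comp 4 (du_tau n1) (by positivity)).congr_deriv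
      (g' := (2*a-b)^4 * (t*(2-t)/((1-t)*(1-t+t^2)))) (by
    rw [lt]
    have e : 1 + t^2/(1-t) = (1-t+t^2)/(1-t) := by field_simp
    rw [e]
    field_simp)
  have d10 := (KM_comp 4 (by norm_num) (du_sub t) h1' (by linarith)).congr_deriv
      (g' := - (b^4/t)) (by
    rw [← hb, sub_sub_cancel]
    ring)
  have dP := du_P n0 n1
  rw [← ha] at d5 d8 dP
  rw [← hb] at dP
  have H := d1.sub (((((dP.add (((d2.sub d3).sub d4).const_mul (4/9))).add
    ((d5.sub d6).const_mul 36)).add ((d7.sub d8).const_mul 12)).add (d9.const_mul (40/9))).add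
    (d10.const_mul 3))
  refine H.congr_deriv ?_
  clear_value a b
  clear H d1 d2 d3 d4 d5 d6 d7 d8 d9 d10 dP
  field_simp
  ring

/-- limits of the pieces at 0 -/
lemma tend_sub : Tendsto (fun t : ℝ => 1 - t) (𝓝[>] 0) (𝓝 1) := by
  have : Tendsto (fun t : ℝ => 1 - t) (𝓝 0) (𝓝 (1 - 0)) :=
    (continuous_const.sub continuous_id).tendsto 0
  rw [sub_zero] at this
  exact this.mono_left nhdsWithin_le_nhds

lemma tend_sub' : Tendsto (fun t : ℝ => 1 - t) (𝓝[>] 0) (𝓝[<] 1) := by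
  refine tendsto_nhdsWithin_of_tendsto_nhds_of_eventually_within _ tend_sub ?_
  filter_upwards [self_mem_nhdsWithin] with x hx
  have hx : 0 < x := hx
  show 1 - x < 1
  linarith

lemma tend_id0 : Tendsto (fun t : ℝ => t) (𝓝[>] 0) (𝓝 0) :=
  tendsto_nhdsWithin_of_tendsto_nhds tendsto_id

lemma tend_gt {u : ℝ → ℝ} (h : Tendsto u (𝓝[>] 0) (𝓝 0)) (hp : ∀ t ∈ Ioo (0:ℝ) 1, 0 < u t) :
    Tendsto u (𝓝[>] 0) (𝓝[>] 0) := by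
  refine tendsto_nhdsWithin_of_tendsto_nhds_of_eventually_within _ h ?_
  filter_upwards [Ioo_mem_nhdsGT (zero_lt_one' ℝ)] with x hx
  exact hp x hx

lemma tend_ab (i j : ℕ) :
    Tendsto (fun t : ℝ => log t ^ i * log (1-t) ^ (j+1)) (𝓝[>] 0) (𝓝 0) := by
  have hb : Tendsto (fun t : ℝ => log (1-t)) (𝓝[>] 0) (𝓝 0) := by
    have := (continuousAt_log one_ne_zero).tendsto.comp tend_sub
    rwa [log_one] at this
  have h1 : Tendsto (fun t : ℝ => log t ^ i * log (1-t)) (𝓝[>] 0) (𝓝 0) := by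
    have h2 := ((tend_logpow i).norm).const_mul 2
    rw [norm_zero, mul_zero] at h2
    refine squeeze_zero_norm' ?_ h2
    filter_upwards [Ioo_mem_nhdsGT (show (0:ℝ) < 1/2 by norm_num)] with t ht
    have h3 : |log (1-t)| ≤ 2 * |t| := by
      have p : 0 < 1 - t := by linarith [ht.2]
      rw [abs_of_nonpos (log_nonpos p.le (by linarith [ht.1])), abs_of_pos ht.1]
      have := Real.one_sub_inv_le_log_of_pos p
      have h5 : (1-t)⁻¹ - 1 ≤ 2 * t := by
        rw [inv_eq_one_div, sub_le_iff_le_add, div_le_iff₀ p]; nlinarith [ht.1, ht.2]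
      linarith
    rw [norm_mul, norm_mul, norm_eq_abs (log (1-t)), norm_eq_abs t]
    have := mul_le_mul_of_nonneg_left h3 (norm_nonneg (log t ^ i))
    linarith
  have := h1.mul (hb.pow j)
  rw [zero_mul] at this
  refine this.congr fun t => ?_
  ring

lemma main_lim : Tendsto (fun t => Gf (t^2/(1-t)) - (P (log t) (log (1-t))
    + 4/9 * (KP 4 (t/(1-t)^2) - KP 4 (t^3) - KM 4 (t*(1-t)))
    + 36 * (KP 4 t - K3 (t/(1-t))) + 12 * (KP 4 (t/(1-t)) - KM 4 t)
    + 40/9 * KP 4 (t^2/(1-t)) + 3 * KM 4 (1-t))) (𝓝[>] 0) (𝓝 (-(3 * KM 4 1))) := by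
  have s1 : ∀ t ∈ Ioo (0:ℝ) 1, 0 < 1 - t := fun t ht => by linarith [ht.2]
  have ut : Tendsto (fun t : ℝ => t^2/(1-t)) (𝓝[>] 0) (𝓝[>] 0) := by
    refine tend_gt ?_ fun t ht => div_pos (pow_pos ht.1 2) (s1 t ht)
    have H : Tendsto (fun t : ℝ => t^2/(1-t)) (𝓝[>] 0) (𝓝 (0^2/1)) :=
      (tend_id0.pow 2).div tend_sub one_ne_zero
    simpa using H
  have ur : Tendsto (fun t : ℝ => t/(1-t)) (𝓝[>] 0) (𝓝[>] 0) := by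
    refine tend_gt ?_ fun t ht => div_pos ht.1 (s1 t ht)
    have H : Tendsto (fun t : ℝ => t/(1-t)) (𝓝[>] 0) (𝓝 (0/1)) :=
      tend_id0.div tend_sub one_ne_zero
    simpa using H
  have uy : Tendsto (fun t : ℝ => t/(1-t)^2) (𝓝[>] 0) (𝓝[>] 0) := by
    refine tend_gt ?_ fun t ht => div_pos ht.1 (pow_pos (s1 t ht) 2)
    have H : Tendsto (fun t : ℝ => t/(1-t)^2) (𝓝[>] 0) (𝓝 (0/1^2)) :=
      tend_id0.div (tend_sub.pow 2) (by norm_num)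
    simpa using H
  have uX : Tendsto (fun t : ℝ => t*(1-t)) (𝓝[>] 0) (𝓝[>] 0) := by
    refine tend_gt ?_ fun t ht => mul_pos ht.1 (s1 t ht)
    simpa using tend_id0.mul tend_sub
  have u3 := tend_pow0 3 (by norm_num)
  have hP : Tendsto (fun t : ℝ => P (log t) (log (1-t))) (𝓝[>] 0) (𝓝 0) := by
    have := ((((tend_ab 3 1).const_mul (136/3)).sub ((tend_ab 2 2).const_mul 68)).add
      ((tend_ab 1 3).const_mul 37)).sub ((tend_ab 0 4).const_mul (103/15))
    simp only [mul_zero, sub_zero, add_zero] at this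
    refine this.congr fun t => ?_
    unfold P; ring
  have H := (Gf_zero.comp ut).sub (((((hP.add (((((KP_zero 4).comp uy).sub ((KP_zero 4).comp u3)).sub
    ((KM_zero 4 (by norm_num)).comp uX)).const_mul (4/9))).add
    (((KP_zero 4).sub (K3_zero.comp ur)).const_mul 36)).add
    ((((KP_zero 4).comp ur).sub (KM_zero 4 (by norm_num))).const_mul 12)).add
    (((KP_zero 4).comp ut).const_mul (40/9))).add
    (((KM_one 4 (by norm_num)).comp tend_sub').const_mul 3))
  simpa using H

lemma main_val : Gf 1 = 28 * zeta 5 := by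
  obtain ⟨p, hp0, hp1, hp⟩ : ∃ p : ℝ, 0 < p ∧ p < 1 ∧ 1 - p = p^2 := by
    have h5 : √5^2 = 5 := sq_sqrt (by norm_num)
    have hlo : 2 < √5 := by rw [lt_sqrt] <;> norm_num
    have hhi : √5 < 3 := by rw [sqrt_lt] <;> norm_num
    refine ⟨(√5-1)/2, by linarith, by linarith, by nlinarith⟩
  have h := const_of_deriv (b := 1) (fun t ht => main_deriv ht) main_lim ⟨hp0, hp1⟩
  have n0 : p ≠ 0 := hp0.ne'
  have e1 : p^2/(1-p) = 1 := by rw [hp]; field_simp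
  have e2 : p/(1-p)^2 = (p^3)⁻¹ := by rw [hp]; field_simp
  have e3 : p/(1-p) = p⁻¹ := by rw [hp]; field_simp
  have e4 : p*(1-p) = p^3 := by rw [hp]; ring
  have q3 : 0 < p^3 := pow_pos hp0 3
  have q3' : p^3 < 1 := pow_lt_one₀ hp0.le hp1 (by norm_num)
  have d1 := dup 4 (by norm_num) (x := p) ⟨hp0, hp1⟩
  have k3 := K3_eq (x := p) ⟨hp0, hp1⟩
  have l3 : log (p^3) = 3 * log p := by rw [log_pow]; push_cast; ring
  have l2 : log (p^2) = 2 * log p := by rw [log_pow]; push_cast; ring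
  have v := KM_val 4 (by norm_num) (by decide)
  norm_num [Nat.factorial] at v
  simp only [e1, e2, e3, e4] at h
  rw [hp, KP_inv q3, KP_inv hp0, K3_inv hp0, l3, l2, KP4_one] at h
  unfold P at h
  linear_combination h + (-48) * d1 - 36 * k3 - 3*v

noncomputable def v (n : ℕ) : ℝ := 1 / (((n:ℝ)+1)^2 * ((2*(n+1)).choose (n+1) : ℝ))
noncomputable def ee (n : ℕ) : ℝ := 1 / ((2*n).choose n : ℝ)

lemma ee_pos (n : ℕ) : 0 < ee n := by
  have : 0 < (2*n).choose n := Nat.choose_pos (by omega)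
  unfold ee; positivity

lemma ee_tend : Tendsto ee atTop (𝓝 0) := by
  have h : ∀ n, ee n ≤ 1 / ((n:ℝ) + 1) := by
    intro n
    unfold ee
    apply one_div_le_one_div_of_le (by positivity)
    have h1 : n + 1 ≤ Nat.centralBinom n := by
      induction n with
      | zero => simp
      | succ n ih =>
        have := Nat.succ_mul_centralBinom_succ n
        nlinarith
    exact_mod_cast h1
  exact squeeze_zero (fun n => (ee_pos n).le) h tendsto_one_div_add_atTop_nhds_zero_nat

lemma v_ee1 (n : ℕ) : ((n:ℝ)+1)^2 * v n = ee (n+1) := by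
  unfold v ee
  have : 0 < (2*(n+1)).choose (n+1) := Nat.choose_pos (by omega)
  field_simp

lemma v_ee0 (n : ℕ) : ((n:ℝ)+1) * (4*n+2) * v n = ee n := by
  unfold v ee
  have h1 : 0 < (2*(n+1)).choose (n+1) := Nat.choose_pos (by omega)
  have h2 : 0 < (2*n).choose n := Nat.choose_pos (by omega)
  have h : ((n:ℝ)+1) * ((2*(n+1)).choose (n+1) : ℝ) = 2*(2*n+1) * ((2*n).choose n : ℝ) := by
    exact_mod_cast Nat.succ_mul_centralBinom_succ n
  have h1 : (0:ℝ) < ((2*(n+1)).choose (n+1) : ℝ) := by exact_mod_cast h1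
  have h2 : (0:ℝ) < ((2*n).choose n : ℝ) := by exact_mod_cast h2
  field_simp
  linear_combination -h

noncomputable def g (N : ℕ) (q : ℝ) : ℝ := ∑ n ∈ Finset.range N, v n * q^(n+1)
noncomputable def g1 (N : ℕ) (q : ℝ) : ℝ := ∑ n ∈ Finset.range N, v n * (((n:ℝ)+1) * q^n)
noncomputable def g2 (N : ℕ) (q : ℝ) : ℝ :=
  ∑ n ∈ Finset.range N, v n * (((n:ℝ)+1) * (n * q^(n-1)))

lemma g_deriv (N : ℕ) (q : ℝ) : HasDerivAt (g N) (g1 N q) q := by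
  refine HasDerivAt.fun_sum fun n _ => ?_
  simpa using (hasDerivAt_pow (n+1) q).const_mul (v n)

lemma g1_deriv (N : ℕ) (q : ℝ) : HasDerivAt (g1 N) (g2 N q) q := by
  refine HasDerivAt.fun_sum fun n _ => ?_
  exact ((hasDerivAt_pow n q).const_mul ((n:ℝ)+1)).const_mul (v n)

lemma g_ode (N : ℕ) (q : ℝ) :
    (4*q - q^2) * g2 N q + (2 - q) * g1 N q = 1 - ee N * q^N := by
  induction N with
  | zero => simp [g1, g2, ee]
  | succ N ih =>
    have h1 : g1 (N+1) q = g1 N q + v N * (((N:ℝ)+1) * q^N) := Finset.sum_range_succ _ _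
    have h2 : g2 (N+1) q = g2 N q + v N * (((N:ℝ)+1) * (N * q^(N-1))) := Finset.sum_range_succ _ _
    have h3 : q * ((N:ℝ) * q^(N-1)) = N * q^N := by
      rcases N with _ | N
      · simp
      · simp only [Nat.add_sub_cancel]; ring
    rw [h1, h2, ← v_ee1]
    rw [← v_ee0] at ih
    linear_combination ih + (4 - q) * v N * ((N:ℝ)+1) * h3

lemma two_bound {f f1 f2 : ℝ → ℝ} {T ε : ℝ} (hT : 0 ≤ T) (h0 : f 0 = 0) (h10 : f1 0 = 0)
    (hf : ∀ x, HasDerivAt f (f1 x) x) (hf1 : ∀ x, HasDerivAt f1 (f2 x) x)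
    (hb : ∀ x ∈ Icc 0 T, |f2 x - 1| ≤ ε) : |f T - T^2/2| ≤ ε * T^2/2 := by
  have hA : ∀ x ∈ Icc 0 T, |f1 x - x| ≤ ε * x := by
    intro x hx
    have := image_norm_le_of_norm_deriv_right_le_deriv_boundary (a := 0) (b := T)
      (f := fun x => f1 x - x) (f' := fun x => f2 x - 1) (B := fun x => ε * x) (B' := fun _ => ε)
      (fun x _ => ((hf1 x).sub (hasDerivAt_id x)).continuousAt.continuousWithinAt)
      (fun x _ => ((hf1 x).sub (hasDerivAt_id x)).hasDerivWithinAt)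
      (by simp [h10]) (fun x => by simpa using (hasDerivAt_id x).const_mul ε)
      (fun x hx => hb x ⟨hx.1, hx.2.le⟩) hx
    exact this
  have hd : ∀ x : ℝ, HasDerivAt (fun x : ℝ => x^2/2) x x := fun x =>
    ((hasDerivAt_pow 2 x).div_const 2).congr_deriv (by simp)
  have := image_norm_le_of_norm_deriv_right_le_deriv_boundary (a := 0) (b := T)
      (f := fun x => f x - x^2/2) (f' := fun x => f1 x - x) (B := fun x => ε * (x^2/2))
      (B' := fun x => ε * x)
      (fun x _ => ((hf x).sub (hd x)).continuousAt.continuousWithinAt)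
      (fun x _ => ((hf x).sub (hd x)).hasDerivWithinAt)
      (by simp [h0]) (fun x => (hd x).const_mul ε)
      (fun x hx => hA x ⟨hx.1, hx.2.le⟩) (right_mem_Icc.2 hT)
  rw [← mul_div_assoc] at this
  exact this

lemma g_zero (N : ℕ) : g N 0 = 0 := by simp [g]

lemma err_bound (N : ℕ) {q : ℝ} (hq : |q| ≤ 1) : |1 - ee N * q^N - 1| ≤ ee N := by
  have h : 1 - ee N * q^N - 1 = -(ee N * q^N) := by ring
  rw [h, abs_neg, abs_mul, abs_pow, abs_of_pos (ee_pos N)]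
  exact mul_le_of_le_one_right (ee_pos N).le (pow_le_one₀ (abs_nonneg _) hq)

lemma g_trig (N : ℕ) : |g N 1 - (π/3)^2/2| ≤ ee N * (π/3)^2/2 := by
  have hq : ∀ x : ℝ, HasDerivAt (fun x => 2 - 2 * cos x) (2 * sin x) x := fun x => by
    simpa using ((hasDerivAt_cos x).const_mul 2).const_sub 2
  have h := two_bound (f := fun x => g N (2 - 2 * cos x))
    (f1 := fun x => g1 N (2 - 2 * cos x) * (2 * sin x))
    (f2 := fun x => 1 - ee N * (2 - 2 * cos x)^N) (T := π/3) (ε := ee N)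
    (by positivity) (by simp [g_zero]) (by simp)
    (fun x => HasDerivAt.comp (h₂ := g N) x (g_deriv N _) (hq x))
    (fun x => by
      have h1 := HasDerivAt.comp (h₂ := g1 N) x (g1_deriv N _) (hq x)
      refine (h1.mul ((hasDerivAt_sin x).const_mul 2)).congr_deriv ?_
      rw [← g_ode]
      simp only [Function.comp]
      linear_combination 4 * g2 N (2 - 2 * cos x) * (sin_sq_add_cos_sq x))
    (fun x hx => err_bound N (by
      have h1 : cos (π/3) ≤ cos x := cos_le_cos_of_nonneg_of_le_pi hx.1 (by linarith [pi_pos]) hx.2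
      rw [cos_pi_div_three] at h1
      rw [abs_le]
      constructor <;> linarith [cos_le_one x]))
  simp only [cos_pi_div_three] at h
  norm_num at h ⊢
  exact h

lemma cosh_W {x : ℝ} (hx : 0 ≤ x) : 2 * cosh (W x) - 2 = x := by
  unfold W
  rw [cosh_two_mul, cosh_sq, sinh_arsinh]
  have := sq_sqrt hx
  linear_combination this

lemma g_hyp (N : ℕ) {x : ℝ} (hx : 0 ≤ x) (hx1 : x ≤ 1) :
    |- g N (-x) - W x^2/2| ≤ ee N * W x^2/2 := by
  have hq : ∀ x : ℝ, HasDerivAt (fun x => 2 - 2 * cosh x) (-(2 * sinh x)) x := fun x => by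
    simpa using ((hasDerivAt_cosh x).const_mul 2).const_sub 2
  have h := two_bound (f := fun x => - g N (2 - 2 * cosh x))
    (f1 := fun x => g1 N (2 - 2 * cosh x) * (2 * sinh x))
    (f2 := fun x => 1 - ee N * (2 - 2 * cosh x)^N) (T := W x) (ε := ee N)
    (W_nonneg x) (by simp [g_zero]) (by simp)
    (fun x => (HasDerivAt.comp (h₂ := g N) x (g_deriv N _) (hq x)).neg.congr_deriv (by ring))
    (fun x => by
      have h1 := HasDerivAt.comp (h₂ := g1 N) x (g1_deriv N _) (hq x)
      refine (h1.mul ((hasDerivAt_sinh x).const_mul 2)).congr_deriv ?_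
      rw [← g_ode]
      simp only [Function.comp]
      linear_combination 4 * g2 N (2 - 2 * cosh x) * (cosh_sq x))
    (fun y hy => err_bound N (by
      have h1 : cosh y ≤ cosh (W x) := by
        rw [cosh_le_cosh, abs_of_nonneg hy.1, abs_of_nonneg (W_nonneg x)]; exact hy.2
      have h2 := cosh_W hx
      rw [abs_le]
      constructor <;> linarith [one_le_cosh y]))
  have e : 2 - 2 * cosh (W x) = -x := by linarith [cosh_W hx]
  simp only [e] at h
  exact h

lemma g_tend : Tendsto (fun N => g N 1) atTop (𝓝 (π^2/18)) := by
  rw [tendsto_iff_norm_sub_tendsto_zero]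
  have h := ee_tend.mul_const ((π/3)^2/2)
  rw [zero_mul] at h
  refine squeeze_zero (fun _ => norm_nonneg _) (fun N => ?_) h
  have := g_trig N
  rw [norm_eq_abs, show π^2/18 = (π/3)^2/2 by ring]
  linarith

lemma pg_int (n : ℕ) : IntervalIntegrable (fun s => s^n * gP 2 s) volume 0 1 :=
  (gP_int 2 one_pos).continuousOn_mul (by fun_prop)

lemma II_val (n : ℕ) : ∫ s in (0:ℝ)..1, s^n * gP 2 s = (-1)^n * (KP 2 1 + 2 * A 3 n) := by
  induction n with
  | zero => simp [A, KP]
  | succ n ih =>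
    have h : (∫ s in (0:ℝ)..1, s^n * gP 2 s) + ∫ s in (0:ℝ)..1, s^(n+1) * gP 2 s
        = 2 / ((n:ℝ)+1)^3 := by
      rw [← intervalIntegral.integral_add (pg_int n) (pg_int (n+1))]
      have := integral_spow_log n 2
      norm_num [Nat.factorial] at this
      rw [← this]
      refine intervalIntegral.integral_congr fun s hs => ?_
      rw [uIcc_of_le zero_le_one] at hs
      have : 1 + s ≠ 0 := by linarith [hs.1]
      simp only [gP]
      field_simp
      ring
    have hA : A 3 (n+1) = A 3 n + (-1:ℝ)^(n+1) / ((n:ℝ)+1)^3 := Finset.sum_range_succ _ _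
    have h1 : ((-1:ℝ)^n) * ((-1:ℝ)^n) = 1 := by rw [← mul_pow]; norm_num
    rw [hA]
    rw [ih] at h
    rw [pow_succ]
    linear_combination h - 2 / ((n:ℝ)+1)^3 * h1

noncomputable def TT (n : ℕ) (s : ℝ) : ℝ :=
  v n * (-1)^n * (12 * (s^n * gP 2 s) - 7/2 * (s^n * log s ^ 2))

lemma TT_int (n : ℕ) : IntervalIntegrable (TT n) volume 0 1 :=
  (((pg_int n).const_mul 12).sub ((spow_log_int n 2).const_mul (7/2))).const_mul _

lemma TT_val (n : ℕ) : v n * (24 * A 3 n + 7 * (-1:ℝ)^(n+1) / ((n:ℝ)+1)^3)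
    = (∫ s in (0:ℝ)..1, TT n s) - 12 * KP 2 1 * (v n * 1^(n+1)) := by
  unfold TT
  rw [intervalIntegral.integral_const_mul, intervalIntegral.integral_sub ((pg_int n).const_mul 12)
    ((spow_log_int n 2).const_mul (7/2)), intervalIntegral.integral_const_mul,
    intervalIntegral.integral_const_mul, II_val, integral_spow_log]
  have h1 : ((-1:ℝ)^n) * ((-1:ℝ)^n) = 1 := by rw [← mul_pow]; norm_num
  norm_num [Nat.factorial]
  rw [pow_succ]
  linear_combination -(24 * v n * A 3 n + 12 * v n * KP 2 1) * h1

lemma sum_val (N : ℕ) : ∑ n ∈ Finset.range N,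
      v n * (24 * A 3 n + 7 * (-1:ℝ)^(n+1) / ((n:ℝ)+1)^3)
    = (∫ s in (0:ℝ)..1, ∑ n ∈ Finset.range N, TT n s) - 12 * KP 2 1 * g N 1 := by
  rw [intervalIntegral.integral_finsetSum fun n _ => TT_int n, g, Finset.mul_sum,
    ← Finset.sum_sub_distrib]
  exact Finset.sum_congr rfl fun n _ => TT_val n

lemma sumTT (N : ℕ) {s : ℝ} (hs : 0 < s) : ∑ n ∈ Finset.range N, TT n s
    = log s ^ 2 * ((- g N (-s)) / s * (12 / (1+s) - 7/2)) := by
  unfold g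
  rw [← Finset.sum_neg_distrib, Finset.sum_div, Finset.sum_mul, Finset.mul_sum]
  refine Finset.sum_congr rfl fun n _ => ?_
  unfold TT gP
  have : 1 + s ≠ 0 := by positivity
  rw [neg_pow s, pow_succ (-1:ℝ), pow_succ s]
  field_simp

lemma err_pt (N : ℕ) {s : ℝ} (hs : s ∈ Ioc (0:ℝ) 1) :
    ‖∑ n ∈ Finset.range N, TT n s - F s / 4‖ ≤ 5 * ee N * log s ^ 2 := by
  obtain ⟨h0, h1⟩ := hs
  have n0 : s ≠ 0 := h0.ne'
  have n1 : 1 + s ≠ 0 := by positivity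
  have e : ∑ n ∈ Finset.range N, TT n s - F s / 4
      = (- g N (-s) - W s^2/2) / s * (12/(1+s) - 7/2) * log s ^ 2 := by
    rw [sumTT N h0]
    unfold F
    field_simp
    ring
  rw [e, norm_mul, norm_of_nonneg (sq_nonneg (log s))]
  refine mul_le_mul_of_nonneg_right ?_ (sq_nonneg _)
  have hA : |(- g N (-s) - W s^2/2) / s| ≤ ee N / 2 := by
    rw [abs_div, abs_of_pos h0, div_le_iff₀ h0]
    have := g_hyp N h0.le h1
    have h2 := mul_le_mul_of_nonneg_left (W_sq_le h0.le) (ee_pos N).le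
    linarith
  have hB : |12/(1+s) - 7/2| ≤ 10 := by
    have h3 : 12/(1+s) ≤ 12 := by rw [div_le_iff₀ (by positivity)]; linarith
    have h4 : 0 ≤ 12/(1+s) := by positivity
    rw [abs_le]; constructor <;> linarith
  rw [norm_mul, norm_eq_abs, norm_eq_abs]
  have := mul_le_mul hA hB (abs_nonneg _) (by have := ee_pos N; positivity)
  linarith

lemma int_tend : Tendsto (fun N => ∫ s in (0:ℝ)..1, ∑ n ∈ Finset.range N, TT n s) atTop
    (𝓝 (7 * zeta 5)) := by
  rw [tendsto_iff_norm_sub_tendsto_zero]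
  have h := (ee_tend.const_mul 5).mul_const (∫ s in (0:ℝ)..1, log s ^ 2)
  rw [mul_zero, zero_mul] at h
  refine squeeze_zero (fun _ => norm_nonneg _) (fun N => ?_) h
  have hv : 7 * zeta 5 = ∫ s in (0:ℝ)..1, F s / 4 := by
    rw [intervalIntegral.integral_div]
    have := main_val
    unfold Gf at this
    rw [this]; ring
  have hi : IntervalIntegrable (fun s => ∑ n ∈ Finset.range N, TT n s) volume 0 1 := by
    have := IntervalIntegrable.sum (Finset.range N) (f := TT) (fun n _ => TT_int n)
    refine this.congr ?_
    intro s _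
    simp
  rw [hv, ← intervalIntegral.integral_sub hi ((F_int one_pos).div_const 4),
    ← intervalIntegral.integral_const_mul]
  refine intervalIntegral.norm_integral_le_of_norm_le zero_le_one ?_
    ((logpow_int01 2).const_mul _)
  filter_upwards with s hs
  exact err_pt N hs

end Ap

theorem stmt_10 :
    Tendsto (fun N => ∑ n ∈ Finset.range N,
      1 / (((n:ℝ)+1)^2 * ((2*(n+1)).choose (n+1) : ℝ)) *
        (24 * A 3 n + 7 * (-1:ℝ)^(n+1) / ((n:ℝ)+1)^3))
      atTop (𝓝 (7 * zeta 5 - Real.pi^2 * zeta 3)) := by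
  have h := Ap.int_tend.sub (Ap.g_tend.const_mul (12 * Ap.KP 2 1))
  have e : 7 * zeta 5 - 12 * Ap.KP 2 1 * (Real.pi^2/18) = 7 * zeta 5 - Real.pi^2 * zeta 3 := by
    rw [Ap.KP2_one]; ring
  rw [e] at h
  refine h.congr fun N => ?_
  exact (Ap.sum_val N).symm
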